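/- arXiv:2507.05529 — 2 statements merged into one kernel-verified Lean document; each statement's English description precedes it below -/
import Mathlib

section
/- Let W be a monoidal category and F : W ⥤ 𝒵 a lax monoidal functor such that for every object X of W the integer ⟨F.obj X⟩ belongs to the set {-1, 0, 1}. Then ⟨F.obj X⟩ = 0 for every object X of W. (This is the computation, from the paper's Remark 3.3, showing that the equalizer in the category of monoidal categories and lax monoidal functors of the constant functor at a and the functor g sending -1, 0, 1 to a and all other integers to b is the terminal monoidal category, included via 0.) -/
open CategoryTheory MonoidalCategory

/-- The discrete monoidal category on the monoid `Multiplicative ℤ`. -/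
abbrev 𝒵 : Type := CategoryTheory.Discrete (Multiplicative ℤ)

/-- If a lax monoidal functor `F` from a monoidal category `W` to `𝒵` takes all of
its values (as integers) in `{-1, 0, 1}`, then all of its values are `0`. -/
theorem laxMonoidal_toAdd_obj_eq_zero_of_mem_pm_one
    {W : Type*} [Category W] [MonoidalCategory W]
    (F : W ⥤ 𝒵) [F.LaxMonoidal]
    (h : ∀ X : W, Multiplicative.toAdd (F.obj X).as ∈ ({-1, 0, 1} : Set ℤ)) :
    ∀ X : W, Multiplicative.toAdd (F.obj X).as = 0 := by
  intro X
  have e := Discrete.eq_of_hom (Functor.LaxMonoidal.μ F X X)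
  have e2 : Multiplicative.toAdd (F.obj X).as + Multiplicative.toAdd (F.obj X).as
      = Multiplicative.toAdd (F.obj (X ⊗ X)).as := congrArg Multiplicative.toAdd e
  have h1 := h X
  have h2 := h (X ⊗ X)
  simp only [Set.mem_insert_iff, Set.mem_singleton_iff] at h1 h2
  omega
end

section
/- There exists an EnrichedCategory 𝒵 Bool structure whose associated integer-valued hom function d satisfies d false false = 0, d true true = 0, d false true = 1 and d true false = -1. In particular, there is a 𝒵-enriched category structure on a two-element type all of whose hom-values lie in {-1, 0, 1} but whose hom-values are not all zero. (This is the paper's explicit witness, in Remark 3.3, of an object lying in the equalizer of Enr(f) and Enr(g) but not in the image of Enr(e).) -/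
open CategoryTheory MonoidalCategory

/-- There is a `𝒵`-enriched category structure on `Bool` whose associated
integer-valued hom function `d` satisfies `d false false = 0`, `d true true = 0`,
`d false true = 1` and `d true false = -1`. -/
theorem exists_enrichedCategory_bool :
    ∃ inst : EnrichedCategory 𝒵 Bool,
      Multiplicative.toAdd (@EnrichedCategory.Hom 𝒵 _ _ Bool inst false false).as = 0 ∧
      Multiplicative.toAdd (@EnrichedCategory.Hom 𝒵 _ _ Bool inst true true).as = 0 ∧
      Multiplicative.toAdd (@EnrichedCategory.Hom 𝒵 _ _ Bool inst false true).as = 1 ∧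
      Multiplicative.toAdd (@EnrichedCategory.Hom 𝒵 _ _ Bool inst true false).as = -1 := by
  let v : Bool → ℤ := fun b => if b then 1 else 0
  let H : Bool → Bool → 𝒵 := fun x y => Discrete.mk (Multiplicative.ofAdd (v y - v x))
  have hid : ∀ x, (𝟙_ 𝒵) = H x x := fun x => by
    apply Discrete.ext
    change (1 : Multiplicative ℤ) = Multiplicative.ofAdd (v x - v x)
    simp
  have hcomp : ∀ x y z, H x y ⊗ H y z = H x z := fun x y z => by
    apply Discrete.ext
    change Multiplicative.ofAdd (v y - v x) * Multiplicative.ofAdd (v z - v y) =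
      Multiplicative.ofAdd (v z - v x)
    rw [← ofAdd_add]
    congr 1
    ring
  refine ⟨{ Hom := H
            id := fun x => eqToHom (hid x)
            comp := fun x y z => eqToHom (hcomp x y z)
            id_comp := fun _ _ => Subsingleton.elim _ _
            comp_id := fun _ _ => Subsingleton.elim _ _
            assoc := fun _ _ _ _ => Subsingleton.elim _ _ }, ?_, ?_, ?_, ?_⟩ <;> rfl
end
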